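/- Let G be a finite solvable group and χ ∈ Irr(G). Then the number of distinct prime divisors of χ(1) is at most η(χ), the number of distinct non-principal irreducible constituents of χ·conj(χ). -/

import Mathlib

open scoped Classical BigOperators

/-- Inner product of class functions on a finite group. -/
noncomputable def charInner (G : Type) [Group G] [Fintype G] (φ ψ : G → ℂ) : ℂ :=
  (Fintype.card G : ℂ)⁻¹ * ∑ g : G, φ g * (starRingEnd ℂ) (ψ g)

/-- `χ` is the character of an irreducible complex representation of `G`. -/
def IsIrrChar (G : Type) [Group G] [Fintype G] (χ : G → ℂ) : Prop :=
  ∃ V : FDRep ℂ G, CategoryTheory.Simple V ∧ V.character = χ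

/-- The number of distinct non-principal irreducible constituents of `χ ⬝ conj χ`. -/
noncomputable def etaChar (G : Type) [Group G] [Fintype G] (χ : G → ℂ) : ℕ :=
  Set.ncard {α : G → ℂ | IsIrrChar G α ∧ α ≠ (fun _ => 1) ∧
    charInner G (fun g => χ g * (starRingEnd ℂ) (χ g)) α ≠ 0}

/-- Kernel of a character, as a set. -/
def charKer (G : Type) [Group G] (χ : G → ℂ) : Set G := {g | χ g = χ 1}

/-- Induced character from a subgroup. -/
noncomputable def indChar (K : Type) [Group K] [Fintype K] (H : Subgroup K) (φ : H → ℂ) :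
    K → ℂ := fun k =>
  (Nat.card H : ℂ)⁻¹ * ∑ x : K, if h : x⁻¹ * k * x ∈ H then φ ⟨x⁻¹ * k * x, h⟩ else 0


/-- Derived length of a group. -/
noncomputable def derivedLength (G : Type) [Group G] : ℕ :=
  sInf {n | derivedSeries G n = ⊥}

/-- A finite group is supersolvable if it has a chain of normal subgroups of `G`
from `⊥` to `⊤` with cyclic factors. -/
def IsSupersolvableGroup (G : Type) [Group G] : Prop :=
  ∃ (n : ℕ) (H : Fin (n + 1) → Subgroup G),
    (∀ i, (H i).Normal) ∧ Monotone H ∧ H 0 = ⊥ ∧ H (Fin.last n) = ⊤ ∧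
    ∀ i : Fin n, ∃ g ∈ H i.succ, H i.succ ≤ H i.castSucc ⊔ Subgroup.zpowers g

/-!
Let `V` afford `χ`, so that `End V` affords `χ · conj χ`. Choose normal subgroups
`G = K₀ > K₁ > ⋯ > 1` with each `Kᵢ / Kᵢ₊₁` of prime-power order `pⁿ`, and follow an irreducible
constituent of the restriction of `V` down this series, until it becomes one-dimensional.

* By Clifford theory, each step divides the degree by a power of `p`: an irreducible `V` whose
  restriction to a normal `N` of prime index `p` has more endomorphisms than `V` has a nonzero
  `N`-endomorphism `T` on which `G` acts through a nontrivial character of `G / N`. The `p` cosets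
  of `N` then permute the eigenspaces of `T` freely, so a constituent of the restriction of `V` has
  degree `dim V / p`.
* If `Kᵢ` and `Kᵢ₊₁` have the same fixed points in `End V`, then the projections onto
  `Kᵢ₊₁`-submodules commute with `Kᵢ`, and the degree does not change at all. Otherwise `χ · conj χ`
  has a constituent which is trivial on `Kᵢ₊₁` but not on `Kᵢ`.

Distinct steps of the second kind yield distinct constituents, and every prime divisor of `χ(1)`
appears at one of them.
-/

open Module Representation

section Subrepresentations

variable {k G V : Type*} [Field k] [Group G] [AddCommGroup V] [Module k V]
  {ρ : Representation k G V}

theorem toSubmodule_eq_bot_iff {U : Subrepresentation ρ} : U.toSubmodule = ⊥ ↔ U = ⊥ :=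
  Subrepresentation.toSubmodule_injective.eq_iff' rfl

theorem toSubmodule_eq_top_iff {U : Subrepresentation ρ} : U.toSubmodule = ⊤ ↔ U = ⊤ :=
  Subrepresentation.toSubmodule_injective.eq_iff' rfl

theorem isAtom_iff_forall_submodule {W : Subrepresentation ρ} :
    IsAtom W ↔ W.toSubmodule ≠ ⊥ ∧ ∀ U : Submodule k V, U < W.toSubmodule →
      (∀ g, ∀ v ∈ U, ρ g v ∈ U) → U = ⊥ :=
  and_congr toSubmodule_eq_bot_iff.not.symm
    ⟨fun h U hU hstable ↦ toSubmodule_eq_bot_iff.2 (h ⟨U, hstable⟩ hU),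
      fun h U hU ↦ toSubmodule_eq_bot_iff.1 (h U.toSubmodule hU U.apply_mem_toSubmodule)⟩

theorem isIrreducible_toRepresentation_iff_isAtom (W : Subrepresentation ρ) :
    W.toRepresentation.IsIrreducible ↔ IsAtom W := by
  let inclusion : Subrepresentation W.toRepresentation ≃o Set.Iic W :=
    { toFun U := ⟨⟨U.toSubmodule.map W.toSubmodule.subtype, by
          rintro g _ ⟨u, hu, rfl⟩
          exact ⟨_, U.apply_mem_toSubmodule g hu, rfl⟩⟩,
        Submodule.map_subtype_le _ _⟩
      invFun U := ⟨U.1.toSubmodule.comap W.toSubmodule.subtype,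
        fun g _ hu ↦ U.1.apply_mem_toSubmodule g hu⟩
      left_inv U := Subrepresentation.ext <|
        Submodule.comap_map_eq_of_injective W.toSubmodule.subtype_injective _
      right_inv U := Subtype.ext <| Subrepresentation.ext <|
        (Submodule.map_comap_subtype _ _).trans (inf_eq_right.2 U.2)
      map_rel_iff' := Submodule.map_le_map_iff_of_injective W.toSubmodule.subtype_injective _ _ }
  exact inclusion.isSimpleOrder_iff.trans Set.isSimpleOrder_Iic_iff_isAtom

instance isAtomic_subrepresentation [FiniteDimensional k V] : IsAtomic (Subrepresentation ρ) :=
  have : WellFoundedLT (Subrepresentation ρ) :=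
    StrictMono.wellFoundedLT (f := Subrepresentation.toSubmodule) fun _ _ h ↦ h
  isAtomic_of_orderBot_wellFounded_lt wellFounded_lt

instance isAtomistic_subrepresentation [h : IsSemisimpleRepresentation ρ] :
    IsAtomistic (Subrepresentation ρ) where
  isLUB_atoms U := by
    let e := Subrepresentation.subrepresentationSubmoduleOrderIso (ρ := ρ)
    have := e.complementedLattice_iff.1 h
    have : IsAtomistic (Submodule (MonoidAlgebra k G) ρ.asModule) :=
      isAtomistic_of_complementedLattice
    obtain ⟨s, hs, hatom⟩ := isLUB_atoms (e U)
    refine ⟨e ⁻¹' s, e.isLUB_preimage.2 hs, fun A hA ↦ ?_⟩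
    exact (e.isAtom_iff A).1 (hatom _ hA)

theorem isCompl_toSubmodule {U C : Subrepresentation ρ} (h : IsCompl U C) :
    IsCompl U.toSubmodule C.toSubmodule :=
  ⟨disjoint_iff.2 (congrArg Subrepresentation.toSubmodule h.inf_eq_bot),
    codisjoint_iff.2 (congrArg Subrepresentation.toSubmodule h.sup_eq_top)⟩

theorem exists_intertwiningMap_isProj [IsSemisimpleRepresentation ρ] (U : Subrepresentation ρ) :
    ∃ P : IntertwiningMap ρ ρ, LinearMap.IsProj U.toSubmodule P.toLinearMap := by
  obtain ⟨C, hUC⟩ := exists_isCompl U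
  have hUC' := isCompl_toSubmodule hUC
  refine ⟨⟨U.toSubmodule.projection C.toSubmodule hUC', fun g ↦ ?_⟩,
    fun v ↦ Submodule.projection_apply_mem hUC' v,
    fun v ↦ Submodule.projection_apply_of_mem_left hUC'⟩
  refine (LinearMap.IsIdempotentElem.commute_iff
    (Submodule.isIdempotentElem_projection hUC') (T := ρ g)).2 ⟨?_, ?_⟩
  · rw [Submodule.range_projection]
    exact U.apply_mem_toSubmodule g
  · rw [Submodule.ker_projection]
    exact C.apply_mem_toSubmodule g

theorem isIrreducible_of_finrank_intertwiningMap_eq_one [IsSemisimpleRepresentation ρ]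
    (h : finrank k (IntertwiningMap ρ ρ) = 1) : ρ.IsIrreducible := by
  have : Nontrivial (IntertwiningMap ρ ρ) := nontrivial_of_finrank_eq_succ h
  have hρ : Nontrivial (Subrepresentation ρ) := by
    refine ⟨⊥, ⊤, fun hbot ↦ one_ne_zero (α := IntertwiningMap ρ ρ) ?_⟩
    have hV : (⊤ : Submodule k V) = ⊥ := toSubmodule_eq_bot_iff.2 hbot.symm
    exact IntertwiningMap.ext <| LinearMap.ext fun v ↦
      (Submodule.mem_bot k).1 (hV ▸ Submodule.mem_top)
  refine { hρ with eq_bot_or_eq_top := fun U ↦ ?_ }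
  obtain ⟨P, hP⟩ := exists_intertwiningMap_isProj U
  obtain ⟨c, rfl⟩ := (finrank_eq_one_iff_of_nonzero' 1 one_ne_zero).1 h P
  rcases eq_or_ne c 0 with rfl | hc
  · rw [zero_smul] at hP
    exact Or.inl (toSubmodule_eq_bot_iff.1 (hP.range.symm.trans LinearMap.range_zero))
  · refine Or.inr (toSubmodule_eq_top_iff.1 (eq_top_iff.2 fun v _ ↦ ?_))
    simpa [smul_smul, hc] using hP.map_mem (c⁻¹ • v)

end Subrepresentations

section Restriction

variable {k G V : Type*} [Field k] [Group G] [AddCommGroup V] [Module k V]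

/-- The restriction of a representation to a subgroup. It lives on the same space `V`, so that
subrepresentations over different subgroups can be compared through their submodules. -/
abbrev restr (ρ : Representation k G V) (K : Subgroup G) : Representation k K V :=
  ρ.comp K.subtype

theorem neZero_natCast_of_dvd {R : Type*} [Semiring R] {m n : ℕ} [NeZero (n : R)] (h : m ∣ n) :
    NeZero (m : R) := by
  obtain ⟨r, rfl⟩ := h
  exact ⟨fun hm ↦ NeZero.ne ((m * r : ℕ) : R) (by simp [hm])⟩

instance neZero_card_subgroup [NeZero (Nat.card G : k)] (K : Subgroup G) :
    NeZero (Nat.card K : k) :=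
  neZero_natCast_of_dvd K.card_subgroup_dvd_card

instance neZero_card_quotient [NeZero (Nat.card G : k)] (K : Subgroup G) :
    NeZero (Nat.card (G ⧸ K) : k) :=
  neZero_natCast_of_dvd K.card_quotient_dvd_card

theorem exists_isAtom_le_invariants_disjoint_invariants {ρ : Representation k G V}
    [IsSemisimpleRepresentation ρ] {L K : Subgroup G} [L.Normal] [K.Normal]
    (h : ¬ (restr ρ L).invariants ≤ (restr ρ K).invariants) :
    ∃ A : Subrepresentation ρ, IsAtom A ∧ A.toSubmodule ≤ (restr ρ L).invariants ∧
      Disjoint A.toSubmodule (restr ρ K).invariants := by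
  let I (M : Subgroup G) [M.Normal] : Subrepresentation ρ :=
    ⟨(restr ρ M).invariants, fun g ↦ le_comap_invariants ρ M g⟩
  have hI : ¬ I L ≤ I K := h
  rw [le_iff_atom_le_imp] at hI
  push Not at hI
  obtain ⟨A, hA, hAL, hAK⟩ := hI
  have hdisj := hA.not_le_iff_disjoint.1 hAK
  exact ⟨A, hA, hAL, disjoint_iff.2 (toSubmodule_eq_bot_iff.2 hdisj.eq_bot)⟩

theorem linHom_apply_eq_self_iff {ρ : Representation k G V} {x : G} {T : V →ₗ[k] V} :
    linHom ρ ρ x T = T ↔ T ∘ₗ ρ x = ρ x ∘ₗ T := by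
  refine ⟨fun h ↦ ?_, fun h ↦ ?_⟩ <;> ext v
  · simpa using congr($h (ρ x v)).symm
  · simpa using congr($h (ρ x⁻¹ v)).symm

theorem mem_invariants_restr {ρ : Representation k G V} {K : Subgroup G} {v : V} :
    v ∈ (restr ρ K).invariants ↔ ∀ x ∈ K, ρ x v = v :=
  Subtype.forall

/-- `U` is the image of an `L`-equivariant projection, and `ρ x` commutes with that projection. -/
theorem apply_mem_of_comm_invariants {ρ : Representation k G V} {L : Subgroup G}
    [IsSemisimpleRepresentation (restr ρ L)] {x : G}
    (h : ∀ T ∈ (restr (linHom ρ ρ) L).invariants, T ∘ₗ ρ x = ρ x ∘ₗ T)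
    (U : Subrepresentation (restr ρ L)) {v : V} (hv : v ∈ U.toSubmodule) :
    ρ x v ∈ U.toSubmodule := by
  obtain ⟨P, hP⟩ := exists_intertwiningMap_isProj U
  have hPx := h P.toLinearMap <| mem_invariants_restr.2 fun y hy ↦
    linHom_apply_eq_self_iff.2 (P.isIntertwining' ⟨y, hy⟩)
  have hPv : P.toLinearMap (ρ x v) = ρ x v := by
    rw [← LinearMap.comp_apply, hPx, LinearMap.comp_apply, hP.map_id v hv]
  exact hPv ▸ hP.map_mem (ρ x v)

theorem exists_isAtom_restr_of_invariants_le {ρ : Representation k G V} {L K : Subgroup G}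
    (hLK : L ≤ K) [IsSemisimpleRepresentation (restr ρ L)]
    (h : (restr (linHom ρ ρ) L).invariants ≤ (restr (linHom ρ ρ) K).invariants)
    {W : Subrepresentation (restr ρ K)} (hW : IsAtom W) :
    ∃ U : Subrepresentation (restr ρ L), IsAtom U ∧ U.toSubmodule = W.toSubmodule := by
  rw [isAtom_iff_forall_submodule] at hW
  refine ⟨⟨W.toSubmodule, fun x ↦ W.apply_mem_toSubmodule ⟨x, hLK x.2⟩⟩,
    isAtom_iff_forall_submodule.2 ⟨hW.1, fun U hU hstable ↦ hW.2 U hU fun x v hv ↦ ?_⟩, rfl⟩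
  exact apply_mem_of_comm_invariants
    (fun T hT ↦ linHom_apply_eq_self_iff.1 (mem_invariants_restr.1 (h hT) x x.2)) ⟨U, hstable⟩ hv

theorem isAtom_top_restr_top (ρ : Representation k G V) [ρ.IsIrreducible] :
    IsAtom (⊤ : Subrepresentation (restr ρ ⊤)) := by
  have htop := isAtom_iff_forall_submodule.1 (isAtom_top (α := Subrepresentation ρ))
  exact isAtom_iff_forall_submodule.2
    ⟨htop.1, fun U hU hstable ↦ htop.2 U hU fun g ↦ hstable ⟨g, Subgroup.mem_top g⟩⟩

theorem exists_isAtom_finrank_eq_of_subgroupOf {ρ : Representation k G V} {L K : Subgroup G}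
    (hLK : L ≤ K) {W : Subrepresentation (restr ρ K)}
    {U : Subrepresentation (restr W.toRepresentation (L.subgroupOf K))} (hU : IsAtom U) :
    ∃ U' : Subrepresentation (restr ρ L), IsAtom U' ∧
      finrank k U'.toSubmodule = finrank k U.toSubmodule := by
  rw [isAtom_iff_forall_submodule] at hU
  have hinj := W.toSubmodule.subtype_injective
  let U' : Subrepresentation (restr ρ L) := ⟨U.toSubmodule.map W.toSubmodule.subtype, by
    rintro x _ ⟨u, hu, rfl⟩
    exact ⟨_, U.apply_mem_toSubmodule ⟨⟨x, hLK x.2⟩, x.2⟩ hu, rfl⟩⟩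
  refine ⟨U', isAtom_iff_forall_submodule.2 ⟨?_, fun S hS hstable ↦ ?_⟩,
    Submodule.finrank_map_subtype_eq _ _⟩
  · exact fun hbot ↦ hU.1 <|
      Submodule.map_injective_of_injective hinj (hbot.trans (Submodule.map_bot _).symm)
  · have hmap : (S.comap W.toSubmodule.subtype).map W.toSubmodule.subtype = S :=
      (Submodule.map_comap_subtype _ _).trans
        (inf_eq_right.2 (hS.le.trans (Submodule.map_subtype_le _ _)))
    have hlt : S.comap W.toSubmodule.subtype < U.toSubmodule := by
      rwa [← Submodule.map_lt_map_iff_of_injective hinj, hmap]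
    rw [← hmap, hU.2 _ hlt fun x v hv ↦ hstable ⟨x, x.2⟩ v hv, Submodule.map_bot]

end Restriction

section PrimeIndex

variable {k G V : Type*} [Field k] [Group G] [AddCommGroup V] [Module k V]

theorem exists_common_eigenvector_of_isMulCommutative_quotient [IsAlgClosed k]
    [FiniteDimensional k V] [Finite G] [NeZero (Nat.card G : k)] {τ : Representation k G V}
    {N : Subgroup G} [N.Normal] [IsMulCommutative (G ⧸ N)]
    (h : ¬ (restr τ N).invariants ≤ τ.invariants) :
    ∃ v ∈ (restr τ N).invariants, v ∉ τ.invariants ∧ ∀ x, ∃ c : k, τ x v = c • v := by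
  let σ := τ.quotientToInvariants N
  have hσfix : ¬ (restr σ ⊥).invariants ≤ (restr σ ⊤).invariants := fun hle ↦ h fun v hv x ↦ by
    have hv' := hle (x := ⟨v, hv⟩) (mem_invariants_restr.2 fun y hy ↦ by
      rw [Subgroup.mem_bot.1 hy, map_one, End.one_apply])
    exact congrArg Subtype.val (mem_invariants_restr.1 hv' x trivial)
  obtain ⟨A, hA, -, hdisj⟩ := exists_isAtom_le_invariants_disjoint_invariants hσfix
  have := (isIrreducible_toRepresentation_iff_isAtom A).2 hA
  obtain ⟨⟨v, hvA⟩, hv0, hspan⟩ := finrank_eq_one_iff'.1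
    (IsIrreducible.finrank_eq_one_of_isMulCommutative A.toRepresentation)
  refine ⟨v, v.2, fun hfix ↦ hv0 (Subtype.ext ?_), fun x ↦ ?_⟩
  · refine Submodule.disjoint_def.1 hdisj v hvA <| mem_invariants_restr.2 fun x _ ↦ ?_
    induction x using QuotientGroup.induction_on with
    | H x => exact Subtype.ext (hfix x)
  · obtain ⟨c, hc⟩ := hspan (A.toRepresentation x ⟨v, hvA⟩)
    exact ⟨c, congrArg (fun w : A.toSubmodule ↦ ((w : (restr τ N).invariants) : V)) hc.symm⟩

theorem eq_of_le_of_index_prime {N S : Subgroup G} (hp : N.index.Prime) (hNS : N ≤ S)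
    (hS : S ≠ ⊤) : N = S := by
  have hmul := Subgroup.relIndex_mul_index hNS
  rcases hp.eq_one_or_self_of_dvd _ (Dvd.intro_left _ hmul) with h1 | hself
  · exact absurd (Subgroup.index_eq_one.1 h1) hS
  · rw [hself] at hmul
    have hone := Nat.eq_of_mul_eq_mul_right hp.pos (hmul.trans (one_mul _).symm)
    exact hNS.antisymm (Subgroup.relIndex_eq_one.1 hone)

theorem inv_mul_mem_of_apply_eq {τ : Representation k G V} {N : Subgroup G} (hp : N.index.Prime)
    {v : V} (hvN : v ∈ (restr τ N).invariants) (hv : v ∉ τ.invariants) {x y : G}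
    (hxy : τ x v = τ y v) : x⁻¹ * y ∈ N := by
  let S : Subgroup G :=
    { carrier := {g | τ g v = v}
      one_mem' := by simp
      mul_mem' := fun {a b} ha hb ↦ by simp_all
      inv_mem' := fun {a} ha ↦ by
        simpa using congrArg (τ a⁻¹) (show τ a v = v from ha).symm }
  have hNS : N = S := eq_of_le_of_index_prime hp (mem_invariants_restr.1 hvN)
    fun htop ↦ hv fun x ↦ (htop ▸ Subgroup.mem_top x : x ∈ S)
  rw [hNS]
  change τ (x⁻¹ * y) v = v
  rw [map_mul, Module.End.mul_apply, ← hxy, inv_self_apply]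

theorem iSup_map_eq_top {ρ : Representation k G V} [ρ.IsIrreducible] {U : Submodule k V}
    (hU : U ≠ ⊥) : ⨆ x : G, U.map (ρ x) = ⊤ := by
  have hstable (g : G) : ⨆ x : G, U.map (ρ x) ≤ (⨆ x : G, U.map (ρ x)).comap (ρ g) := by
    refine iSup_le fun x ↦ ?_
    rintro _ ⟨u, hu, rfl⟩
    exact Submodule.mem_iSup_of_mem (g * x) ⟨u, hu, by simp⟩
  let S : Subrepresentation ρ := ⟨⨆ x : G, U.map (ρ x), hstable⟩
  have hUS : U ≤ S.toSubmodule := fun u hu ↦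
    Submodule.mem_iSup_of_mem 1 ⟨u, hu, by simp⟩
  refine toSubmodule_eq_top_iff.2 ((eq_bot_or_eq_top S).resolve_left fun hS ↦ hU ?_)
  exact le_bot_iff.1 (hUS.trans_eq (toSubmodule_eq_bot_iff.2 hS))

theorem finrank_eq_sum_of_iSupIndep [FiniteDimensional k V] {ι : Type*} [Fintype ι]
    {W : ι → Submodule k V} (hind : iSupIndep W) (htop : ⨆ i, W i = ⊤) :
    finrank k V = ∑ i, finrank k (W i) := by
  have hW := DirectSum.isInternal_submodule_of_iSupIndep_of_iSup_eq_top hind htop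
  rw [← finrank_directSum]
  exact (LinearEquiv.ofBijective (DirectSum.coeLinearMap W) hW).finrank_eq.symm

theorem finrank_eq_index_mul_of_iSupIndep [FiniteDimensional k V] {ρ : Representation k G V}
    [ρ.IsIrreducible] {N : Subgroup G} [N.FiniteIndex] {U : Subrepresentation (restr ρ N)}
    (hU : U ≠ ⊥) (hind : iSupIndep fun q : G ⧸ N ↦ U.toSubmodule.map (ρ q.out)) :
    finrank k V = N.index * finrank k U.toSubmodule := by
  have : Fintype (G ⧸ N) := Fintype.ofFinite _
  have htop : ⨆ q : G ⧸ N, U.toSubmodule.map (ρ q.out) = ⊤ := by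
    rw [← top_le_iff, ← iSup_map_eq_top (ρ := ρ) (U := U.toSubmodule)
      (toSubmodule_eq_bot_iff.not.2 hU)]
    refine iSup_le fun x ↦ ?_
    rintro _ ⟨u, hu, rfl⟩
    obtain ⟨n, hn⟩ := QuotientGroup.mk_out_eq_mul N x
    refine Submodule.mem_iSup_of_mem (x : G ⧸ N)
      ⟨ρ (n⁻¹ : N) u, U.apply_mem_toSubmodule n⁻¹ hu, ?_⟩
    rw [hn]
    simp
  calc finrank k V = ∑ q : G ⧸ N, finrank k (U.toSubmodule.map (ρ q.out)) :=
        finrank_eq_sum_of_iSupIndep hind htop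
    _ = ∑ _q : G ⧸ N, finrank k U.toSubmodule := Finset.sum_congr rfl fun q _ ↦
        (Submodule.equivMapOfInjective _ (ρ.apply_bijective q.out).injective _).finrank_eq.symm
    _ = N.index * finrank k U.toSubmodule := by
        rw [Finset.sum_const, smul_eq_mul, Finset.card_univ, ← Nat.card_eq_fintype_card,
          Subgroup.index]

theorem injective_of_semiinvariant {ρ : Representation k G V} [ρ.IsIrreducible] {T : V →ₗ[k] V}
    (hT0 : T ≠ 0) {c : G → k} (hTc : ∀ x, T ∘ₗ ρ x = c x • (ρ x ∘ₗ T)) :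
    Function.Injective T := by
  let S : Subrepresentation ρ := ⟨LinearMap.ker T, fun x v hv ↦ by
    have hxv : T (ρ x v) = c x • ρ x (T v) := congr($(hTc x) v)
    rw [LinearMap.mem_ker, hxv, LinearMap.mem_ker.1 hv, map_zero, smul_zero]⟩
  have hS : S ≠ ⊤ := fun htop ↦ hT0 (LinearMap.ker_eq_top.1 (toSubmodule_eq_top_iff.2 htop))
  exact LinearMap.ker_eq_bot.1 <|
    toSubmodule_eq_bot_iff.2 ((eq_bot_or_eq_top S).resolve_right hS)

theorem exists_isAtom_finrank_eq_index_mul [IsAlgClosed k] [FiniteDimensional k V]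
    {ρ : Representation k G V} [ρ.IsIrreducible] {N : Subgroup G} [N.FiniteIndex] {T : V →ₗ[k] V}
    (hT0 : T ≠ 0) (hTN : ∀ x ∈ N, T ∘ₗ ρ x = ρ x ∘ₗ T) {c : G → k}
    (hTc : ∀ x, T ∘ₗ ρ x = c x • (ρ x ∘ₗ T)) (hc : ∀ x y, c x = c y → x⁻¹ * y ∈ N) :
    ∃ U : Subrepresentation (restr ρ N), IsAtom U ∧
      finrank k V = N.index * finrank k U.toSubmodule := by
  have : Nontrivial V := IsSimpleModule.nontrivial (MonoidAlgebra k G) ρ.asModule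
  obtain ⟨μ, hμ⟩ := End.exists_eigenvalue T
  have hμ0 : μ ≠ 0 := by
    rintro rfl
    rw [End.hasEigenvalue_iff, End.eigenspace_zero] at hμ
    exact hμ (LinearMap.ker_eq_bot.2 (injective_of_semiinvariant hT0 hTc))
  let E : Subrepresentation (restr ρ N) := ⟨End.eigenspace T μ, fun x v hv ↦ by
    have hxv : T (ρ x v) = ρ x (T v) := congr($(hTN x x.2) v)
    rw [End.mem_eigenspace_iff] at hv ⊢
    exact hxv.trans (by rw [hv, map_smul]; rfl)⟩
  obtain ⟨U, hU, hUE⟩ := (eq_bot_or_exists_atom_le E).resolve_left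
    fun hE ↦ hμ (toSubmodule_eq_bot_iff.2 hE)
  have hmap (x : G) : U.toSubmodule.map (ρ x) ≤ End.eigenspace T (c x * μ) := by
    rintro _ ⟨u, hu, rfl⟩
    have hxu : T (ρ x u) = c x • ρ x (T u) := congr($(hTc x) u)
    rw [End.mem_eigenspace_iff, hxu, End.mem_eigenspace_iff.1 (hUE hu), map_smul, smul_smul]
  have hinj : Function.Injective fun q : G ⧸ N ↦ c q.out * μ := fun q r hqr ↦ by
    simpa using QuotientGroup.eq.2 (hc _ _ (mul_right_cancel₀ hμ0 hqr))
  exact ⟨U, hU, finrank_eq_index_mul_of_iSupIndep hU.1 <|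
    ((End.eigenspaces_iSupIndep T).comp hinj).mono fun q ↦ hmap q.out⟩

theorem exists_isAtom_finrank_eq_or_of_index_prime [IsAlgClosed k] [FiniteDimensional k V]
    [Finite G] [NeZero (Nat.card G : k)] (ρ : Representation k G V) [ρ.IsIrreducible]
    (N : Subgroup G) [N.Normal] (hp : N.index.Prime) :
    ∃ U : Subrepresentation (restr ρ N), IsAtom U ∧
      (finrank k V = finrank k U.toSubmodule ∨
        finrank k V = N.index * finrank k U.toSubmodule) := by
  by_cases h : (restr (linHom ρ ρ) N).invariants ≤ (linHom ρ ρ).invariants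
  · obtain ⟨U, hU, hUV⟩ := exists_isAtom_restr_of_invariants_le le_top
      (fun T hT ↦ mem_invariants_restr.2 fun x _ ↦ h hT x) (isAtom_top_restr_top ρ)
    exact ⟨U, hU, Or.inl (hUV ▸ (finrank_top k V).symm)⟩
  · have := Fact.mk hp
    have : IsMulCommutative (G ⧸ N) :=
      (isCyclic_of_prime_card N.index_eq_card.symm).isMulCommutative
    obtain ⟨T, hTN, hTG, hT⟩ := exists_common_eigenvector_of_isMulCommutative_quotient h
    have hT0 : T ≠ 0 := fun h0 ↦ hTG (h0.symm ▸ zero_mem _)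
    choose c hc using hT
    have hTc (x : G) : T ∘ₗ ρ x = c x⁻¹ • (ρ x ∘ₗ T) := by
      ext v
      simpa using congr(ρ x ($(hc x⁻¹) v))
    have hsep (x y : G) (hxy : c x⁻¹ = c y⁻¹) : x⁻¹ * y ∈ N := by
      refine Subgroup.Normal.mem_comm ‹N.Normal› (inv_mem_iff.1 ?_)
      simpa using inv_mul_mem_of_apply_eq hp hTN hTG ((hc x⁻¹).trans (hxy ▸ (hc y⁻¹).symm))
    obtain ⟨U, hU, hUV⟩ := exists_isAtom_finrank_eq_index_mul hT0
      (fun x hx ↦ linHom_apply_eq_self_iff.1 (mem_invariants_restr.1 hTN x hx)) hTc hsep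
    exact ⟨U, hU, Or.inr hUV⟩

end PrimeIndex

section PrimePowerIndex

theorem exists_normal_index_eq_prime {G : Type*} [Group G] [Finite G] {p n : ℕ} (hp : p.Prime)
    {N : Subgroup G} [N.Normal] (hN : N.index = p ^ (n + 1)) :
    ∃ M : Subgroup G, M.Normal ∧ N ≤ M ∧ M.index = p := by
  have := Fact.mk hp
  have hcard : Nat.card (G ⧸ N) = p ^ (n + 1) := hN
  obtain ⟨H, hH⟩ := Sylow.exists_subgroup_card_pow_prime (G := G ⧸ N) p (n := n)
    (hcard ▸ pow_dvd_pow p n.le_succ)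
  have hindex : H.index = p := by
    have hmul := H.card_mul_index
    rw [hH, hcard, pow_succ] at hmul
    exact Nat.eq_of_mul_eq_mul_left (pow_pos hp.pos n) hmul
  have hnormal : H.Normal := Subgroup.normal_of_index_eq_minFac_card <| by
    rw [hindex, hcard, hp.pow_minFac n.succ_ne_zero]
  refine ⟨H.comap (QuotientGroup.mk' N), hnormal.comap _, ?_, ?_⟩
  · exact QuotientGroup.le_comap_mk' N H
  · rw [H.index_comap_of_surjective (QuotientGroup.mk'_surjective N), hindex]

variable {k : Type*} [Field k] [IsAlgClosed k]

theorem exists_isAtom_finrank_eq_pow_mul {p n : ℕ} (hp : p.Prime) {G V : Type*} [Group G]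
    [Finite G] [NeZero (Nat.card G : k)] [AddCommGroup V] [Module k V] [FiniteDimensional k V]
    (ρ : Representation k G V) [ρ.IsIrreducible] {N : Subgroup G} [N.Normal]
    (hN : N.index = p ^ n) :
    ∃ U : Subrepresentation (restr ρ N), IsAtom U ∧
      ∃ e, finrank k V = p ^ e * finrank k U.toSubmodule := by
  induction n generalizing G V with
  | zero =>
    obtain rfl : N = ⊤ := Subgroup.index_eq_one.1 hN
    exact ⟨⊤, isAtom_top_restr_top ρ, 0, by rw [pow_zero, one_mul]; exact (finrank_top k V).symm⟩
  | succ n ih =>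
    obtain ⟨M, hM, hNM, hMp⟩ := exists_normal_index_eq_prime hp hN
    obtain ⟨W, hW, hVW⟩ := exists_isAtom_finrank_eq_or_of_index_prime ρ M (hMp ▸ hp)
    have := (isIrreducible_toRepresentation_iff_isAtom W).2 hW
    have hindex : (N.subgroupOf M).index = p ^ n := by
      have hmul := Subgroup.relIndex_mul_index hNM
      rw [hN, hMp, pow_succ] at hmul
      exact Nat.eq_of_mul_eq_mul_right hp.pos hmul
    obtain ⟨U, hU, e, hWU⟩ := ih W.toRepresentation hindex
    obtain ⟨U', hU', hUU'⟩ := exists_isAtom_finrank_eq_of_subgroupOf hNM hU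
    rw [hMp, hWU, ← hUU'] at hVW
    rcases hVW with hVW | hVW
    · exact ⟨U', hU', e, hVW⟩
    · exact ⟨U', hU', e + 1, by rw [hVW, pow_succ', mul_assoc]⟩

theorem exists_isAtom_finrank_eq_pow_mul_of_relIndex {p n : ℕ} (hp : p.Prime) {G V : Type*}
    [Group G] [Finite G] [NeZero (Nat.card G : k)] [AddCommGroup V] [Module k V]
    [FiniteDimensional k V] {ρ : Representation k G V} {L K : Subgroup G} [L.Normal] (hLK : L ≤ K)
    (h : L.relIndex K = p ^ n) {W : Subrepresentation (restr ρ K)} (hW : IsAtom W) :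
    ∃ U : Subrepresentation (restr ρ L), IsAtom U ∧
      ∃ e, finrank k W.toSubmodule = p ^ e * finrank k U.toSubmodule := by
  have := (isIrreducible_toRepresentation_iff_isAtom W).2 hW
  obtain ⟨U, hU, e, hWU⟩ := exists_isAtom_finrank_eq_pow_mul hp W.toRepresentation h
  obtain ⟨U', hU', hUU'⟩ := exists_isAtom_finrank_eq_of_subgroupOf hLK hU
  exact ⟨U', hU', e, hUU' ▸ hWU⟩

end PrimePowerIndex

section Solvable

theorem range_powMonoidHom_ne_top {A : Type*} [CommGroup A] [Finite A] {p : ℕ} (hp : p.Prime)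
    (hpA : p ∣ Nat.card A) : (powMonoidHom p : A →* A).range ≠ ⊤ := by
  have := Fact.mk hp
  intro htop
  have hinj := Finite.injective_iff_surjective.2 (MonoidHom.range_eq_top.1 htop)
  obtain ⟨a, ha⟩ := exists_prime_orderOf_dvd_card' p hpA
  have ha1 : a = 1 := hinj (by simp [← ha, pow_orderOf_eq_one])
  exact hp.ne_one (ha ▸ orderOf_eq_one_iff.2 ha1)

theorem exists_index_range_powMonoidHom_eq_pow (A : Type*) [CommGroup A] [Finite A] {p : ℕ}
    (hp : p.Prime) : ∃ n, (powMonoidHom p : A →* A).range.index = p ^ n := by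
  have := Fact.mk hp
  refine IsPGroup.iff_card.1 fun a ↦ ?_
  induction a using QuotientGroup.induction_on with
  | H a => exact ⟨1, (QuotientGroup.eq_one_iff _).2 ⟨a, by simp⟩⟩

theorem exists_characteristic_index_eq_pow (G : Type*) [Group G] [Finite G] [Nontrivial G]
    [Group.IsSolvable G] :
    ∃ p n : ℕ, p.Prime ∧ ∃ N : Subgroup G, N.Characteristic ∧ N ≠ ⊤ ∧ N.index = p ^ n := by
  have : Nontrivial (Abelianization G) := QuotientGroup.nontrivial_iff.2
    (Group.IsSolvable.commutator_lt_top_of_nontrivial G).ne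
  obtain ⟨p, hp, hpA⟩ := Nat.exists_prime_and_dvd (Finite.one_lt_card (α := Abelianization G)).ne'
  obtain ⟨n, hn⟩ := exists_index_range_powMonoidHom_eq_pow (Abelianization G) hp
  have hsurj : Function.Surjective (Abelianization.of (G := G)) := QuotientGroup.mk_surjective
  refine ⟨p, n, hp, (powMonoidHom p).range.comap Abelianization.of, ?_, ?_, ?_⟩
  · refine Subgroup.characteristic_iff_le_comap.2 fun φ g hg ↦ ?_
    obtain ⟨a, ha⟩ := hg
    refine ⟨Abelianization.map φ.toMonoidHom a, ?_⟩
    simpa using congrArg (Abelianization.map φ.toMonoidHom) ha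
  · exact fun htop ↦ range_powMonoidHom_ne_top hp hpA (Subgroup.comap_injective hsurj htop)
  · rw [Subgroup.index_comap_of_surjective _ hsurj, hn]

theorem exists_normal_lt_relIndex_eq_pow {G : Type*} [Group G] [Finite G] [Group.IsSolvable G]
    {K : Subgroup G} [K.Normal] (hK : K ≠ ⊥) :
    ∃ p n : ℕ, p.Prime ∧ ∃ L : Subgroup G, L.Normal ∧ L < K ∧ L.relIndex K = p ^ n := by
  have := (Subgroup.nontrivial_iff_ne_bot K).2 hK
  obtain ⟨p, n, hp, N, hchar, htop, hindex⟩ := exists_characteristic_index_eq_pow K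
  refine ⟨p, n, hp, N.map K.subtype, inferInstance, ?_, ?_⟩
  · refine (Subgroup.map_subtype_le N).lt_of_ne fun h ↦
      htop (Subgroup.map_injective K.subtype_injective ?_)
    rw [h, ← MonoidHom.range_eq_map, K.range_subtype]
  · rw [Subgroup.relIndex, Subgroup.subgroupOf,
      Subgroup.comap_map_eq_self_of_injective K.subtype_injective, hindex]

end Solvable

section Characters

theorem simple_iff_isIrreducible.{u} {k G : Type u} [Field k] [IsAlgClosed k] [Group G] [Finite G]
    [NeZero (Nat.card G : k)] (X : FDRep k G) :
    CategoryTheory.Simple X ↔ IsIrreducible (V := X) X.ρ := by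
  have hfinrank : finrank k (X ⟶ X) = finrank k (IntertwiningMap (V := X) (W := X) X.ρ X.ρ) :=
    ((linHom.invariantsEquivFDRepHom X X).symm.trans
      (invariantsEquivIntertwiningMap (V := X) (W := X) X.ρ X.ρ)).finrank_eq
  rw [FDRep.simple_iff_end_is_rank_one, hfinrank]
  exact ⟨isIrreducible_of_finrank_intertwiningMap_eq_one,
    fun _ ↦ IsIrreducible.finrank_intertwiningMap_self _⟩

theorem isSemisimple_of_pow_eq_one {k V : Type*} [Field k] [AddCommGroup V] [Module k V]
    {f : End k V} {n : ℕ} (hn : (n : k) ≠ 0) (hf : f ^ n = 1) : f.IsSemisimple :=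
  End.isSemisimple_of_squarefree_aeval_eq_zero (p := Polynomial.X ^ n - 1)
    (Polynomial.X_pow_sub_one_separable_iff.2 hn).squarefree (by simp [hf])

theorem trace_eq_sum_mul_finrank_eigenspace {k V : Type*} [Field k] [IsAlgClosed k]
    [AddCommGroup V] [Module k V] [FiniteDimensional k V] {f h : End k V} (hf : f.IsSemisimple)
    {c : k → k} (hc : ∀ μ, ∀ v ∈ f.eigenspace μ, h v = c μ • v) :
    LinearMap.trace k V h =
      ∑ μ ∈ (f.finite_hasEigenvalue).toFinset, c μ * finrank k (f.eigenspace μ) := by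
  have hmaps (μ : k) : Set.MapsTo h (f.eigenspace μ) (f.eigenspace μ) := fun v hv ↦ by
    rw [hc μ v hv]
    exact Submodule.smul_mem _ _ hv
  have hinternal := DirectSum.isInternal_submodule_of_iSupIndep_of_iSup_eq_top
    f.eigenspaces_iSupIndep hf.iSup_eigenspace_eq_top
  refine (LinearMap.trace_eq_sum_trace_restrict' hinternal f.finite_hasEigenvalue hmaps).trans
    (Finset.sum_congr rfl fun μ _ ↦ ?_)
  have hscalar : h.restrict (hmaps μ) = c μ • LinearMap.id := by
    ext v
    exact hc μ v v.2
  rw [hscalar, map_smul, LinearMap.trace_id, smul_eq_mul]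

theorem pow_eq_one_of_hasEigenvalue {k V : Type*} [Field k] [AddCommGroup V] [Module k V]
    {f : End k V} {n : ℕ} (hf : f ^ n = 1) {μ : k} (hμ : f.HasEigenvalue μ) : μ ^ n = 1 := by
  obtain ⟨v, hv⟩ := hμ.exists_hasEigenvector
  have hpow := hv.pow_apply n
  rw [hf, End.one_apply] at hpow
  exact smul_left_injective k hv.2 (by simpa using hpow.symm)

theorem character_inv_eq_conj {G V : Type*} [Group G] [Finite G] [AddCommGroup V] [Module ℂ V]
    [FiniteDimensional ℂ V] (ρ : Representation ℂ G V) (g : G) :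
    ρ.character g⁻¹ = (starRingEnd ℂ) (ρ.character g) := by
  have hcard : Nat.card G ≠ 0 := Nat.card_pos.ne'
  have hpow : ρ g ^ Nat.card G = 1 := by rw [← map_pow, pow_card_eq_one', map_one]
  have hss := isSemisimple_of_pow_eq_one (Nat.cast_ne_zero.2 hcard) hpow
  have hinv (μ : ℂ) (v : V) (hv : v ∈ End.eigenspace (ρ g) μ) : ρ g⁻¹ v = μ⁻¹ • v := by
    have hv' : v = μ • ρ g⁻¹ v := by
      simpa using congr(ρ g⁻¹ $(End.mem_eigenspace_iff.1 hv))
    rcases eq_or_ne μ 0 with rfl | hμ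
    · rw [zero_smul] at hv'
      rw [hv', map_zero, smul_zero]
    · rw [eq_inv_smul_iff₀ hμ, ← hv']
  rw [character, character, trace_eq_sum_mul_finrank_eigenspace hss hinv,
    trace_eq_sum_mul_finrank_eigenspace hss (c := id) fun μ v ↦ End.mem_eigenspace_iff.1, map_sum]
  refine Finset.sum_congr rfl fun μ hμ ↦ ?_
  have hroot := pow_eq_one_of_hasEigenvalue hpow ((Set.Finite.mem_toFinset _).1 hμ)
  rw [map_mul, map_natCast, id, Complex.inv_eq_conj (Complex.norm_eq_one_of_pow_eq_one hroot hcard)]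

theorem character_linHom_self {G V : Type*} [Group G] [Finite G] [AddCommGroup V] [Module ℂ V]
    [FiniteDimensional ℂ V] (ρ : Representation ℂ G V) :
    (linHom ρ ρ).character = fun g ↦ ρ.character g * (starRingEnd ℂ) (ρ.character g) := by
  ext g
  rw [char_linHom, character_inv_eq_conj, mul_comm]

variable {G : Type} [Group G] [Fintype G]

theorem isIrrChar_character {V : Type} [AddCommGroup V] [Module ℂ V] [FiniteDimensional ℂ V]
    (ρ : Representation ℂ G V) [h : ρ.IsIrreducible] : IsIrrChar G ρ.character :=
  ⟨FDRep.of ρ, (simple_iff_isIrreducible _).2 h, rfl⟩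

theorem charInner_character {V W : Type*} [AddCommGroup V] [Module ℂ V] [FiniteDimensional ℂ V]
    [AddCommGroup W] [Module ℂ W] [FiniteDimensional ℂ W] (ρ : Representation ℂ G V)
    (σ : Representation ℂ G W) :
    charInner G ρ.character σ.character = finrank ℂ (IntertwiningMap σ ρ) := by
  have := invertibleOfNonzero (NeZero.ne (Nat.card G : ℂ))
  simp_rw [← card_inv_mul_sum_char_mul_char_eq_finrank, charInner, character_inv_eq_conj,
    Nat.card_eq_fintype_card]

theorem charInner_character_toRepresentation_ne_zero {V : Type*} [AddCommGroup V] [Module ℂ V]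
    [FiniteDimensional ℂ V] {ρ : Representation ℂ G V} {A : Subrepresentation ρ} (hA : A ≠ ⊥) :
    charInner G ρ.character A.toRepresentation.character ≠ 0 := by
  rw [charInner_character, Nat.cast_ne_zero]
  intro h0
  have := finrank_zero_iff.1 h0
  have hsubtype := congr(IntertwiningMap.toLinearMap
    $(Subsingleton.elim (α := IntertwiningMap A.toRepresentation ρ)
      ⟨A.toSubmodule.subtype, fun _ ↦ rfl⟩ 0))
  refine hA (toSubmodule_eq_bot_iff.1 ?_)
  rw [← A.toSubmodule.range_subtype]
  exact LinearMap.range_eq_bot.2 hsubtype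

/-- Orthonormality makes the irreducible characters linearly independent. -/
theorem finite_setOf_isIrrChar : {α : G → ℂ | IsIrrChar G α}.Finite := by
  have := invertibleOfNonzero (NeZero.ne (Nat.card G : ℂ))
  let B : LinearMap.BilinForm ℂ (G → ℂ) :=
    ∑ g : G, LinearMap.BilinForm.linMulLin (LinearMap.proj g) (LinearMap.proj g⁻¹)
  have hB (X Y : FDRep ℂ G) [CategoryTheory.Simple X] [CategoryTheory.Simple Y] :
      (Nat.card G : ℂ)⁻¹ * B X.character Y.character = if Nonempty (X ≅ Y) then 1 else 0 := by
    simpa [B, LinearMap.sum_apply] using FDRep.char_orthonormal X Y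
  have hli : LinearIndependent ℂ ((↑) : {α : G → ℂ | IsIrrChar G α} → G → ℂ) := by
    refine LinearMap.BilinForm.linearIndependent_of_iIsOrtho (B := B) ?_ ?_
    · rintro ⟨_, X, hX, rfl⟩ ⟨_, Y, hY, rfl⟩ hne
      have hXY : IsEmpty (X ≅ Y) := ⟨fun i ↦ hne (Subtype.ext (FDRep.char_iso i))⟩
      have hcard : (Nat.card G : ℂ)⁻¹ ≠ 0 := inv_ne_zero (NeZero.ne _)
      exact (mul_eq_zero.1 ((hB X Y).trans (if_neg (not_nonempty_iff.2 hXY)))).resolve_left hcard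
    · rintro ⟨_, X, hX, rfl⟩ h0
      have hXX := hB X X
      rw [h0, mul_zero, if_pos ⟨CategoryTheory.Iso.refl X⟩] at hXX
      exact zero_ne_one hXX
  exact hli.finite_of_isNoetherian

end Characters

section CharacterKernel

variable {G : Type} [Group G] {V : Type*} [AddCommGroup V] [Module ℂ V]

theorem subset_charKer_character_toRepresentation {ρ : Representation ℂ G V}
    {A : Subrepresentation ρ} {L : Subgroup G} (hA : A.toSubmodule ≤ (restr ρ L).invariants) :
    (L : Set G) ⊆ charKer G A.toRepresentation.character := fun x hx ↦ by
  have hfix : A.toRepresentation x = A.toRepresentation 1 := by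
    ext a
    simpa [Subrepresentation.toRepresentation] using mem_invariants_restr.1 (hA a.2) x hx
  exact congrArg (LinearMap.trace ℂ A.toSubmodule) hfix

variable [Finite G] [FiniteDimensional ℂ V]

theorem finrank_invariants_of_subset_charKer {ρ : Representation ℂ G V} {K : Subgroup G}
    (hK : (K : Set G) ⊆ charKer G ρ.character) :
    finrank ℂ (restr ρ K).invariants = finrank ℂ V := by
  have := Fintype.ofFinite K
  have := invertibleOfNonzero (NeZero.ne (Nat.card K : ℂ))
  have hchar (x : K) : (restr ρ K).character x = finrank ℂ V := (hK x.2).trans (char_one ρ)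
  have hsum := card_inv_mul_sum_char_eq_finrank (restr ρ K)
  rw [Finset.sum_congr rfl fun x _ ↦ hchar x, Finset.sum_const, Finset.card_univ, nsmul_eq_mul,
    ← Nat.card_eq_fintype_card, inv_mul_cancel_left₀ (NeZero.ne _)] at hsum
  exact_mod_cast hsum.symm

theorem not_subset_charKer_character_toRepresentation {ρ : Representation ℂ G V}
    {A : Subrepresentation ρ} {K : Subgroup G} (hA : A ≠ ⊥)
    (hAK : Disjoint A.toSubmodule (restr ρ K).invariants) :
    ¬ (K : Set G) ⊆ charKer G A.toRepresentation.character := fun hK ↦ by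
  have hbot : (restr A.toRepresentation K).invariants = ⊥ :=
    (Submodule.eq_bot_iff _).2 fun a ha ↦ Subtype.ext <|
      Submodule.disjoint_def.1 hAK a a.2 fun x ↦ congrArg Subtype.val (ha x)
  have hfinrank := finrank_invariants_of_subset_charKer hK
  rw [hbot, finrank_bot] at hfinrank
  exact hA (toSubmodule_eq_bot_iff.1 (Submodule.finrank_eq_zero.1 hfinrank.symm))

end CharacterKernel

section Constituents

theorem card_primeFactors_pow_mul_le {p : ℕ} (hp : p.Prime) (e m : ℕ) :
    (p ^ e * m).primeFactors.card ≤ m.primeFactors.card + 1 := by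
  have hsub : (p ^ e * m).primeFactors ⊆ insert p m.primeFactors := fun q hq ↦ by
    obtain ⟨hq, hdvd, hne⟩ := Nat.mem_primeFactors.1 hq
    rcases hq.dvd_mul.1 hdvd with hqp | hqm
    · exact Finset.mem_insert.2 (Or.inl <|
        (Nat.prime_dvd_prime_iff_eq hq hp).1 (hq.dvd_of_dvd_pow hqp))
    · exact Finset.mem_insert_of_mem (Nat.mem_primeFactors.2 ⟨hq, hqm, right_ne_zero_of_mul hne⟩)
  exact (Finset.card_le_card hsub).trans (Finset.card_insert_le _ _)

variable {G V : Type} [Group G] [Fintype G] [AddCommGroup V] [Module ℂ V] [FiniteDimensional ℂ V]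

/-- The irreducible constituents of `χ ⬝ conj χ` whose kernel does not contain `K`. They interpolate
between the empty set at `K = ⊥` and the constituents counted by `etaChar` at `K = ⊤`. -/
def constituentsNontrivialOn (χ : G → ℂ) (K : Subgroup G) : Set (G → ℂ) :=
  {α | IsIrrChar G α ∧ charInner G (fun g ↦ χ g * (starRingEnd ℂ) (χ g)) α ≠ 0 ∧
    ¬ (K : Set G) ⊆ charKer G α}

theorem finite_constituentsNontrivialOn (χ : G → ℂ) (K : Subgroup G) :
    (constituentsNontrivialOn χ K).Finite :=
  finite_setOf_isIrrChar.subset fun _ h ↦ h.1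

theorem constituentsNontrivialOn_mono (χ : G → ℂ) : Monotone (constituentsNontrivialOn χ) :=
  fun _ _ hLK _ hα ↦ ⟨hα.1, hα.2.1, fun hK ↦ hα.2.2 ((SetLike.coe_subset_coe.2 hLK).trans hK)⟩

theorem ncard_constituentsNontrivialOn_le_etaChar (χ : G → ℂ) (K : Subgroup G) :
    (constituentsNontrivialOn χ K).ncard ≤ etaChar G χ := by
  refine Set.ncard_le_ncard (fun α hα ↦ ⟨hα.1, ?_, hα.2.1⟩)
    (finite_setOf_isIrrChar.subset fun _ h ↦ h.1)
  rintro rfl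
  exact hα.2.2 fun _ _ ↦ rfl

theorem constituentsNontrivialOn_ssubset {ρ : Representation ℂ G V} {L K : Subgroup G} [L.Normal]
    [K.Normal] (hLK : L ≤ K)
    (h : ¬ (restr (linHom ρ ρ) L).invariants ≤ (restr (linHom ρ ρ) K).invariants) :
    constituentsNontrivialOn ρ.character L ⊂ constituentsNontrivialOn ρ.character K := by
  obtain ⟨A, hA, hAL, hAK⟩ := exists_isAtom_le_invariants_disjoint_invariants h
  have := (isIrreducible_toRepresentation_iff_isAtom A).2 hA
  refine (Set.ssubset_iff_of_subset (constituentsNontrivialOn_mono _ hLK)).2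
    ⟨A.toRepresentation.character, ⟨isIrrChar_character _, ?_, ?_⟩, fun hL ↦ hL.2.2 ?_⟩
  · rw [← character_linHom_self]
    exact charInner_character_toRepresentation_ne_zero hA.1
  · exact not_subset_charKer_character_toRepresentation hA.1 hAK
  · exact subset_charKer_character_toRepresentation hAL

theorem card_primeFactors_finrank_le [Group.IsSolvable G] {ρ : Representation ℂ G V}
    (K : Subgroup G) [hK : K.Normal] {W : Subrepresentation (restr ρ K)} (hW : IsAtom W) :
    (finrank ℂ W.toSubmodule).primeFactors.card ≤
      (constituentsNontrivialOn ρ.character K).ncard := by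
  induction K using WellFoundedLT.induction generalizing hK with
  | ind K ih =>
  have := (isIrreducible_toRepresentation_iff_isAtom W).2 hW
  rcases eq_or_ne K ⊥ with rfl | hbot
  · simp [IsIrreducible.finrank_eq_one_of_isMulCommutative W.toRepresentation]
  obtain ⟨p, n, hp, L, hL, hLK, hindex⟩ := exists_normal_lt_relIndex_eq_pow hbot
  by_cases h : (restr (linHom ρ ρ) L).invariants ≤ (restr (linHom ρ ρ) K).invariants
  · obtain ⟨U, hU, hUW⟩ := exists_isAtom_restr_of_invariants_le hLK.le h hW
    rw [← hUW]
    exact (ih L hLK hU).trans <|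
      Set.ncard_le_ncard (constituentsNontrivialOn_mono _ hLK.le)
        (finite_constituentsNontrivialOn _ _)
  · obtain ⟨U, hU, e, hWU⟩ := exists_isAtom_finrank_eq_pow_mul_of_relIndex hp hLK.le hindex hW
    calc (finrank ℂ W.toSubmodule).primeFactors.card
        ≤ (finrank ℂ U.toSubmodule).primeFactors.card + 1 :=
          hWU ▸ card_primeFactors_pow_mul_le hp e _
      _ ≤ (constituentsNontrivialOn ρ.character L).ncard + 1 := Nat.succ_le_succ (ih L hLK hU)
      _ ≤ (constituentsNontrivialOn ρ.character K).ncard :=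
          Set.ncard_lt_ncard (constituentsNontrivialOn_ssubset hLK.le h)
            (finite_constituentsNontrivialOn _ _)

end Constituents

/-- Theorem B, first part: for solvable `G`, the degree `χ(1)` has at most
`η(χ)` distinct prime divisors. -/
theorem primeFactors_degree_le_eta (G : Type) [Group G] [Fintype G]
    (hsolv : IsSolvable G) (χ : G → ℂ) (hχ : IsIrrChar G χ)
    (d : ℕ) (hd : χ 1 = (d : ℂ)) :
    d.primeFactors.card ≤ etaChar G χ := by
  have : Group.IsSolvable G := hsolv
  obtain ⟨X, hX, rfl⟩ := hχ
  have := (simple_iff_isIrreducible X).1 hX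
  have hdegree : d = finrank ℂ X := by
    rw [FDRep.char_one] at hd
    exact_mod_cast hd.symm
  have hprimes := card_primeFactors_finrank_le ⊤ (isAtom_top_restr_top (V := X) X.ρ)
  calc d.primeFactors.card = (finrank ℂ (⊤ : Submodule ℂ X)).primeFactors.card := by
        rw [finrank_top, hdegree]
    _ ≤ (constituentsNontrivialOn X.character ⊤).ncard := hprimes
    _ ≤ etaChar G X.character := ncard_constituentsNontrivialOn_le_etaChar _ _
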